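/- Assume π̄(a) > 0 for every a ∈ A, and let S' = {p(·|a) : a ∈ A} be the revealed signal set with revealed attention function α'(s|x) = ∑_{a : p(·|a)=s} π(a|x). Then the revealed attention function is a garbling of the true attention function α: there exists a row-stochastic kernel γ : S → S' (γ(s'|s) ≥ 0, ∑_{s'∈S'} γ(s'|s) = 1 for every s ∈ S) such that α'(s'|x) = ∑_{s∈S} α(s|x)·γ(s'|s) for all x ∈ X and s' ∈ S'; explicitly, γ(s'|s) = ∑_{a : p(·|a)=s'} η(a|s) works. -/

import Mathlib

/-!
Merging the actions with a common revealed posterior is right multiplication of a kernel on actions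
by the 0-1 incidence matrix `L` of the map `a ↦ p(·|a)`. Hence `α' = (α η) L = α (η L)`, and
`γ = η L` is row-stochastic because `η` and `L` are.
-/

open Finset
open scoped Classical

/-- The induced signal probability `p(s) = ∑_x μ(x) α(s|x)`. -/
noncomputable def sigProb {X S : Type*} [Fintype X]
    (μ : X → ℝ) (α : X → S → ℝ) (s : S) : ℝ :=
  ∑ x, μ x * α x s

/-- The induced action-selection policy `π(a|x) = ∑_s α(s|x) η(a|s)`. -/
noncomputable def policy {X S A : Type*} [Fintype S]
    (α : X → S → ℝ) (η : S → A → ℝ) (x : X) (a : A) : ℝ :=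
  ∑ s, α x s * η s a

/-- The induced action probability `π̄(a) = ∑_x μ(x) π(a|x)`. -/
noncomputable def actProb {X S A : Type*} [Fintype X] [Fintype S]
    (μ : X → ℝ) (α : X → S → ℝ) (η : S → A → ℝ) (a : A) : ℝ :=
  ∑ x, μ x * policy α η x a

/-- The revealed posterior `p(·|a)` as a function on `X`. -/
noncomputable def revPost {X S A : Type*} [Fintype X] [Fintype S]
    (μ : X → ℝ) (α : X → S → ℝ) (η : S → A → ℝ) (a : A) : X → ℝ :=
  fun x => μ x * policy α η x a / actProb μ α η a

/-- The revealed signal set `S' = {p(·|a) : a ∈ A}`. -/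
noncomputable def revSignals {X S A : Type*} [Fintype X] [Fintype S] [Fintype A]
    (μ : X → ℝ) (α : X → S → ℝ) (η : S → A → ℝ) : Finset (X → ℝ) :=
  Finset.univ.image (revPost μ α η)

/-- The revealed attention function `α'(s'|x) = ∑_{a : p(·|a) = s'} π(a|x)`. -/
noncomputable def revAtt {X S A : Type*} [Fintype X] [Fintype S] [Fintype A]
    (μ : X → ℝ) (α : X → S → ℝ) (η : S → A → ℝ) (s' : X → ℝ) (x : X) : ℝ :=
  ∑ a, if revPost μ α η a = s' then policy α η x a else 0

/-- The explicit garbling kernel `γ(s'|s) = ∑_{a : p(·|a) = s'} η(a|s)`. -/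
noncomputable def garbling {X S A : Type*} [Fintype X] [Fintype S] [Fintype A]
    (μ : X → ℝ) (α : X → S → ℝ) (η : S → A → ℝ) (s : S) (s' : X → ℝ) : ℝ :=
  ∑ a, if revPost μ α η a = s' then η s a else 0

section Pushforward

variable {A T M : Type*} [Fintype A] [DecidableEq T] [AddCommMonoid M]

/-- The pushforward of a finite family of weights `w` along a labelling `r` of its index set:
the weight of a label is the total weight of its fibre. It merges the columns of a kernel that
carry the same label. -/
def pushforward (r : A → T) (w : A → M) (t : T) : M :=
  ∑ a with r a = t, w a

theorem pushforward_nonneg [Preorder M] [AddLeftMono M]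
    (r : A → T) {w : A → M} (hw : ∀ a, 0 ≤ w a) (t : T) : 0 ≤ pushforward r w t :=
  sum_nonneg fun a _ ↦ hw a

theorem sum_image_pushforward (r : A → T) (w : A → M) :
    ∑ t ∈ univ.image r, pushforward r w t = ∑ a, w a :=
  sum_fiberwise_of_maps_to (fun a _ ↦ mem_image_of_mem r (mem_univ a)) w

theorem pushforward_sum_mul {S R : Type*} [Fintype S] [NonUnitalNonAssocSemiring R]
    (r : A → T) (p : S → R) (η : S → A → R) (t : T) :
    pushforward r (fun a ↦ ∑ s, p s * η s a) t = ∑ s, p s * pushforward r (η s) t := by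
  simp only [pushforward, mul_sum]
  exact sum_comm

end Pushforward

theorem garbling_eq_pushforward {X S A : Type*} [Fintype X] [Fintype S] [Fintype A]
    (μ : X → ℝ) (α : X → S → ℝ) (η : S → A → ℝ) (s : S) (s' : X → ℝ) :
    garbling μ α η s s' = pushforward (revPost μ α η) (η s) s' :=
  (sum_filter _ _).symm

theorem revAtt_eq_pushforward {X S A : Type*} [Fintype X] [Fintype S] [Fintype A]
    (μ : X → ℝ) (α : X → S → ℝ) (η : S → A → ℝ) (s' : X → ℝ) (x : X) :
    revAtt μ α η s' x = pushforward (revPost μ α η) (policy α η x) s' :=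
  (sum_filter _ _).symm

theorem revealed_attention_is_garbling_general
    {X S A T R : Type*} [Fintype S] [Fintype A] [DecidableEq T]
    [NonAssocSemiring R] [Preorder R] [AddLeftMono R]
    (r : A → T) (α : X → S → R) (η : S → A → R)
    (hηnn : ∀ s a, 0 ≤ η s a) (hηsum : ∀ s, ∑ a, η s a = 1) :
    (∀ s t, 0 ≤ pushforward r (η s) t) ∧
    (∀ s, ∑ t ∈ univ.image r, pushforward r (η s) t = 1) ∧
    (∀ x t, pushforward r (fun a ↦ ∑ s, α x s * η s a) t =
      ∑ s, α x s * pushforward r (η s) t) :=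
  ⟨fun s ↦ pushforward_nonneg r (hηnn s),
    fun s ↦ (sum_image_pushforward r (η s)).trans (hηsum s),
    fun x ↦ pushforward_sum_mul r (α x) η⟩

/-- The revealed attention function is a garbling of the true attention function:
there is a row-stochastic kernel `γ` from `S` to the revealed signal set with
`α'(s'|x) = ∑_s α(s|x) γ(s'|s)`; explicitly `γ(s'|s) = ∑_{a : p(·|a)=s'} η(a|s)` works. -/
theorem revealed_attention_is_garbling
    {X S A : Type*} [Fintype X] [Fintype S] [Fintype A]
    (μ : X → ℝ) (hμpos : ∀ x, 0 < μ x) (hμsum : ∑ x, μ x = 1)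
    (α : X → S → ℝ) (hαnn : ∀ x s, 0 ≤ α x s) (hαsum : ∀ x, ∑ s, α x s = 1)
    (η : S → A → ℝ) (hηnn : ∀ s a, 0 ≤ η s a) (hηsum : ∀ s, ∑ a, η s a = 1)
    (hπbar : ∀ a, 0 < actProb μ α η a) :
    ∃ γ : S → (X → ℝ) → ℝ,
      (∀ s s', 0 ≤ γ s s') ∧
      (∀ s, ∑ s' ∈ revSignals μ α η, γ s s' = 1) ∧
      (∀ x s', s' ∈ revSignals μ α η →
        revAtt μ α η s' x = ∑ s, α x s * γ s s') ∧
      γ = garbling μ α η := by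
  obtain ⟨hnn, hsum, hcomp⟩ :=
    revealed_attention_is_garbling_general (revPost μ α η) α η hηnn hηsum
  simp only [← garbling_eq_pushforward] at hnn hsum hcomp
  exact ⟨garbling μ α η, hnn, hsum,
    fun x s' _ ↦ (revAtt_eq_pushforward μ α η s' x).trans (hcomp x s'), rfl⟩
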